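/- Let S be a semioval of size q − 1 + a in PG(2,q) with an a-secant ℓ, let N_ℓ be the nucleus of ℓ, let L denote the set of tangents to S through the points of S∖ℓ, and let B = {N_ℓ} ∪ (S Δ ℓ). Then one of the following holds. (1) S is an oval. (2) L is contained in a pencil of lines with carrier C; then C ∈ ℓ and B∖{C} is a blocking set of Rédei type with Rédei line ℓ. (3) L is not contained in any pencil; then B is a minimal blocking set of Rédei type with Rédei line ℓ, and moreover: (a) p does not divide a; (b) for every R ∈ S∖ℓ the line RN_ℓ is not a tangent to S; (c) if R₁, R₂ ∈ S∖ℓ and there is a point T ∈ ℓ such that R_iT meets S ∪ {N_ℓ} in at least three points for i = 1, 2, then |R₁M ∩ (S ∪ {N_ℓ})| = |R₂M ∩ (S ∪ {N_ℓ})| for every M ∈ ℓ; (d) if R₁, R₂ ∈ S∖ℓ and the tangents to S at these two points meet each other on the line ℓ, then |R₁M ∩ (S ∪ {N_ℓ})| = |R₂M ∩ (S ∪ {N_ℓ})| for every M ∈ ℓ. -/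

import Mathlib

/-! Common setup: the Desarguesian projective plane `PG(2,q)` over a finite field `F = GF(q)`.
Points are the projective points of `F³`; lines are the 2-dimensional linear subspaces of `F³`,
with incidence given by containment. -/

/-- Points of `PG(2,F)`. -/
abbrev PGPoint (F : Type*) [Field F] := Projectivization F (Fin 3 → F)

/-- Lines of `PG(2,F)`: the 2-dimensional linear subspaces of `F³`. -/
abbrev PGLine (F : Type*) [Field F] := {W : Submodule F (Fin 3 → F) // Module.finrank F W = 2}

/-- Incidence between a point and a line of `PG(2,F)`. -/
def pgMem {F : Type*} [Field F] (P : PGPoint F) (L : PGLine F) : Prop :=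
  P.submodule ≤ L.val

/-- The number of points of the point set `B` lying on the line `L`;
`L` is a *`k`-secant* of `B` if `nsec B L = k`, a *tangent* if `k = 1`,
a *bisecant* if `k = 2` and a *trisecant* if `k = 3`. -/
noncomputable def nsec {F : Type*} [Field F] (B : Set (PGPoint F)) (L : PGLine F) : ℕ :=
  {P ∈ B | pgMem P L}.ncard

/-- A blocking set: a point set meeting every line. -/
def isBlocking {F : Type*} [Field F] (B : Set (PGPoint F)) : Prop :=
  ∀ L : PGLine F, ∃ P ∈ B, pgMem P L

/-- A minimal blocking set: every point is essential. -/
def isMinimalBlocking {F : Type*} [Field F] (B : Set (PGPoint F)) : Prop :=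
  isBlocking B ∧ ∀ P ∈ B, ¬ isBlocking (B \ {P})

/-- `B` is a blocking set of Rédei type with Rédei line `ℓ`: a blocking set of size
`q + N ≤ 2q` such that `ℓ` meets `B` in exactly `N = |B| − q` points. -/
def isRedeiWithLine {F : Type*} [Field F] (q : ℕ) (B : Set (PGPoint F)) (ℓ : PGLine F) : Prop :=
  isBlocking B ∧ B.ncard ≤ 2 * q ∧ nsec B ℓ + q = B.ncard

/-- A semioval: through each of its points there passes exactly one tangent. -/
def isSemioval {F : Type*} [Field F] (S : Set (PGPoint F)) : Prop :=
  ∀ P ∈ S, ∃! t : PGLine F, pgMem P t ∧ nsec S t = 1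

/-!
If `S` is not an oval, take `ℓ` as the line at infinity. The affine points of `S ∪ {N}` are then
`q` points, and each point of `ℓ ∩ S` is a direction they do not determine: an affine line through
it meets `S` again unless it is a tangent, and then it contains `N`. Hence these `q` points form the
graph of a function, and adding any non-empty set of points of `ℓ` that contains all determined
directions yields a blocking set of Rédei type. A carrier of the tangents at the affine points of
`S` is exactly an undetermined direction outside `S`.

The remaining claims come from the slope polynomial `∏ (X - slope)` of a point `R` of the graph, the
product being over the other `q - 1` points. By Wilson's theorem it takes the value `1` at the
slopes of the points of `ℓ ∩ S`, and it vanishes at all other slopes except possibly the slope `m`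
of the tangent at `R`. For a polynomial `G` of degree less than `q` the sum of all values is minus
the coefficient of `X ^ (q - 1)`. For the slope polynomial this gives the value `-a` at `m`. So `m`
determines the slope polynomial, and with it the intersection numbers of all lines through `R`; and
`N` lies on the tangent if and only if `p ∣ a`, but then `N` would be a carrier off `ℓ`. A line of
slope `t` through `R` with at least three points makes `t` a double root, and the same fact applied
to the slope polynomial divided by `X - t` determines `m` from `t`.
-/

section Incidence

variable {F : Type*} [Field F]

theorem pgMem_mk {v : Fin 3 → F} (hv : v ≠ 0) (L : PGLine F) :
    pgMem (Projectivization.mk F v hv) L ↔ v ∈ L.val := by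
  rw [pgMem, Projectivization.submodule_mk, Submodule.span_singleton_le_iff_mem]

theorem finrank_submodule_sup_of_ne {P Q : PGPoint F} (h : P ≠ Q) :
    Module.finrank F ↥(P.submodule ⊔ Q.submodule) = 2 := by
  have hi := Projectivization.linearIndependent_pair_iff_ne.mpr h
  rw [P.submodule_eq, Q.submodule_eq, ← Submodule.span_union, Set.singleton_union,
    ← Matrix.range_cons_cons_empty P.rep Q.rep ![], finrank_span_eq_card hi, Fintype.card_fin]

theorem exists_line_through {P Q : PGPoint F} (h : P ≠ Q) :
    ∃ L : PGLine F, pgMem P L ∧ pgMem Q L :=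
  ⟨⟨P.submodule ⊔ Q.submodule, finrank_submodule_sup_of_ne h⟩, le_sup_left, le_sup_right⟩

theorem line_unique {P Q : PGPoint F} (h : P ≠ Q) {L₁ L₂ : PGLine F} (hP₁ : pgMem P L₁)
    (hQ₁ : pgMem Q L₁) (hP₂ : pgMem P L₂) (hQ₂ : pgMem Q L₂) : L₁ = L₂ := by
  have hspan : ∀ L : PGLine F, pgMem P L → pgMem Q L → P.submodule ⊔ Q.submodule = L.val :=
    fun L hP hQ => Submodule.eq_of_le_of_finrank_eq (sup_le hP hQ)
      ((finrank_submodule_sup_of_ne h).trans L.2.symm)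
  exact Subtype.ext ((hspan L₁ hP₁ hQ₁).symm.trans (hspan L₂ hP₂ hQ₂))

theorem point_unique {L ℓ : PGLine F} (h : L ≠ ℓ) {P Q : PGPoint F} (hP : pgMem P L)
    (hP' : pgMem P ℓ) (hQ : pgMem Q L) (hQ' : pgMem Q ℓ) : P = Q :=
  by_contra fun hne => h (line_unique hne hP hQ hP' hQ')

theorem exists_common_point (L₁ L₂ : PGLine F) : ∃ P : PGPoint F, pgMem P L₁ ∧ pgMem P L₂ := by
  have hdim := Submodule.finrank_sup_add_finrank_inf_eq L₁.val L₂.val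
  have hsup : Module.finrank F ↥(L₁.val ⊔ L₂.val) ≤ 3 := by
    simpa using Submodule.finrank_le (L₁.val ⊔ L₂.val)
  rw [L₁.2, L₂.2] at hdim
  have hne : L₁.val ⊓ L₂.val ≠ ⊥ := fun hbot => by
    rw [hbot, finrank_bot] at hdim
    lia
  obtain ⟨v, hv, hv0⟩ := Submodule.exists_mem_ne_zero_of_ne_bot hne
  exact ⟨Projectivization.mk F v hv0, (pgMem_mk hv0 _).mpr hv.1, (pgMem_mk hv0 _).mpr hv.2⟩

theorem exists_line_notMem (P : PGPoint F) : ∃ L : PGLine F, ¬ pgMem P L := by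
  obtain ⟨W, hW⟩ := Submodule.exists_isCompl P.submodule
  have hdim := Submodule.finrank_add_eq_of_isCompl hW
  rw [P.finrank_submodule, Module.finrank_fin_fun] at hdim
  refine ⟨⟨W, by lia⟩, fun hP => ?_⟩
  have hbot : P.submodule = ⊥ := disjoint_self.mp (hW.disjoint.mono_right hP)
  have hone := P.finrank_submodule
  rw [hbot, finrank_bot] at hone
  exact zero_ne_one hone

theorem ncard_setOf_pgMem [Fintype F] (ℓ : PGLine F) :
    {P : PGPoint F | pgMem P ℓ}.ncard = Fintype.card F + 1 := by
  have hinj := Projectivization.map_injective ℓ.val.subtype ℓ.val.injective_subtype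
  have hrange : {P : PGPoint F | pgMem P ℓ} =
      Set.range (Projectivization.map ℓ.val.subtype ℓ.val.injective_subtype) := by
    ext P
    induction P using Projectivization.ind with
    | h v hv =>
      rw [Set.mem_ofPred_eq, pgMem_mk]
      refine ⟨fun hvℓ => ⟨Projectivization.mk F ⟨v, hvℓ⟩ (by simpa using hv), rfl⟩, ?_⟩
      rintro ⟨Q, hQ⟩
      induction Q using Projectivization.ind with
      | h w hw =>
        rw [Projectivization.map_mk] at hQ
        exact (pgMem_mk hv ℓ).mp (hQ ▸ (pgMem_mk _ ℓ).mpr w.2)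
  rw [hrange, ← Set.image_univ, Set.ncard_image_of_injective _ hinj, Set.ncard_univ,
    Projectivization.card_of_finrank_two F ℓ.val ℓ.2, Nat.card_eq_fintype_card]

theorem nsec_setOf_pgMem {L ℓ : PGLine F} (h : L ≠ ℓ) : nsec {P | pgMem P ℓ} L = 1 := by
  obtain ⟨P, hPL, hPℓ⟩ := exists_common_point L ℓ
  refine Set.ncard_eq_one.mpr ⟨P, Set.eq_singleton_iff_unique_mem.mpr ⟨⟨hPℓ, hPL⟩, ?_⟩⟩
  exact fun Q hQ => point_unique h hQ.2 hQ.1 hPL hPℓ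

end Incidence

section Pencil

open Finset

variable {F : Type*} [Field F] [Finite F]

/-- The pencil with carrier `P`: the finite set of lines through `P`. -/
noncomputable def pencil (P : PGPoint F) : Finset (PGLine F) :=
  (Set.toFinite {L : PGLine F | pgMem P L}).toFinset

theorem mem_pencil {P : PGPoint F} {L : PGLine F} : L ∈ pencil P ↔ pgMem P L := by
  simp [pencil]

theorem sum_nsec_pencil {S : Set (PGPoint F)} {P : PGPoint F} (hP : P ∉ S) :
    ∑ L ∈ pencil P, nsec S L = S.ncard := by
  classical
  have hS := S.toFinite
  have hnsec : ∀ L, nsec S L = #(hS.toFinset.bipartiteAbove (fun L Q => pgMem Q L) L) := by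
    intro L
    rw [nsec, ← Set.ncard_coe_finset, coe_bipartiteAbove]
    simp
  have hjoin : ∀ Q ∈ hS.toFinset, #((pencil P).bipartiteBelow (fun L Q => pgMem Q L) Q) = 1 := by
    intro Q hQ
    have hPQ : P ≠ Q := fun h => hP (h ▸ hS.mem_toFinset.mp hQ)
    obtain ⟨L, hPL, hQL⟩ := exists_line_through hPQ
    refine card_eq_one.mpr ⟨L, eq_singleton_iff_unique_mem.mpr ⟨?_, fun L' hL' => ?_⟩⟩
    · exact (mem_bipartiteBelow _).mpr ⟨mem_pencil.mpr hPL, hQL⟩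
    · obtain ⟨hPL', hQL'⟩ := (mem_bipartiteBelow _).mp hL'
      exact line_unique hPQ (mem_pencil.mp hPL') hQL' hPL hQL
  simp_rw [hnsec]
  rw [sum_card_bipartiteAbove_eq_sum_card_bipartiteBelow, sum_congr rfl hjoin, sum_const,
    smul_eq_mul, mul_one, Set.ncard_eq_toFinset_card S hS]

end Pencil

section PencilCard

variable {F : Type*} [Field F] [Fintype F]

theorem card_pencil (P : PGPoint F) : (pencil P).card = Fintype.card F + 1 := by
  obtain ⟨ℓ, hPℓ⟩ := exists_line_notMem P
  rw [← ncard_setOf_pgMem ℓ, ← sum_nsec_pencil (P := P) hPℓ, Finset.card_eq_sum_ones]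
  refine Finset.sum_congr rfl fun L hL => (nsec_setOf_pgMem ?_).symm
  rintro rfl
  exact hPℓ (mem_pencil.mp hL)

theorem card_pencil_erase [DecidableEq (PGLine F)] {P : PGPoint F} {L : PGLine F}
    (hPL : pgMem P L) : ((pencil P).erase L).card = Fintype.card F := by
  rw [Finset.card_erase_of_mem (mem_pencil.mpr hPL), card_pencil, Nat.add_sub_cancel]

end PencilCard

section Secant

variable {F : Type*} [Field F] {S : Set (PGPoint F)} {L ℓ : PGLine F}

theorem exists_ne_of_nsec_ne_one (h : nsec S L ≠ 1) {R : PGPoint F} (hR : R ∈ S)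
    (hRL : pgMem R L) : ∃ Q ∈ S, Q ≠ R ∧ pgMem Q L := by
  by_contra! hunique
  exact h <| Set.ncard_eq_one.mpr ⟨R, Set.eq_singleton_iff_unique_mem.mpr
    ⟨⟨hR, hRL⟩, fun Q hQ => by_contra fun hQR => hunique Q hQ.1 hQR hQ.2⟩⟩

variable [Finite F]

theorem nsec_pos_iff : 0 < nsec S L ↔ ∃ P ∈ S, pgMem P L :=
  Set.ncard_pos (Set.toFinite _)

theorem nsec_le_one_iff :
    nsec S L ≤ 1 ↔ ∀ P ∈ S, pgMem P L → ∀ Q ∈ S, pgMem Q L → P = Q := by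
  rw [nsec, Set.ncard_le_one_iff]
  exact ⟨fun h P hP hPL Q hQ hQL => h ⟨hP, hPL⟩ ⟨hQ, hQL⟩,
    fun h {P Q} hP hQ => h P hP.1 hP.2 Q hQ.1 hQ.2⟩

theorem eq_of_nsec_eq_one (h : nsec S L = 1) {P Q : PGPoint F} (hP : P ∈ S) (hPL : pgMem P L)
    (hQ : Q ∈ S) (hQL : pgMem Q L) : P = Q :=
  nsec_le_one_iff.mp h.le P hP hPL Q hQ hQL

/-- The affine part of `S` when `ℓ` is taken as the line at infinity: the points of `S` off `ℓ`. -/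
def affinePart (S : Set (PGPoint F)) (ℓ : PGLine F) : Set (PGPoint F) :=
  {P ∈ S | ¬ pgMem P ℓ}

theorem nsec_add_ncard_affinePart : nsec S ℓ + (affinePart S ℓ).ncard = S.ncard :=
  Set.ncard_inter_add_ncard_sdiff_eq_ncard S {P | pgMem P ℓ} (Set.toFinite S)

theorem nsec_eq_nsec_affinePart_add (hL : L ≠ ℓ) {M : PGPoint F} (hML : pgMem M L)
    (hMℓ : pgMem M ℓ) : nsec S L = nsec (affinePart S ℓ) L + (S ∩ {M}).ncard := by
  have hsplit : {P ∈ S | pgMem P L} = {P ∈ affinePart S ℓ | pgMem P L} ∪ S ∩ {M} := by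
    ext P
    constructor
    · rintro ⟨hPS, hPL⟩
      by_cases hPℓ : pgMem P ℓ
      · exact Or.inr ⟨hPS, point_unique hL hPL hPℓ hML hMℓ⟩
      · exact Or.inl ⟨⟨hPS, hPℓ⟩, hPL⟩
    · rintro (⟨hP, hPL⟩ | ⟨hPS, rfl⟩)
      exacts [⟨hP.1, hPL⟩, ⟨hPS, hML⟩]
  have hdisj : Disjoint {P ∈ affinePart S ℓ | pgMem P L} (S ∩ {M}) := by
    rw [Set.disjoint_left]
    rintro P ⟨hP, -⟩ ⟨-, rfl⟩
    exact hP.2 hMℓ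
  rw [nsec, hsplit, Set.ncard_union_eq hdisj, nsec]

end Secant

section RedeiType

open Finset

variable {F : Type*} [Field F] {S Z : Set (PGPoint F)} {ℓ : PGLine F} {Q : PGPoint F}

/-- `Q` is a direction not determined by the affine part of `S`: every affine line through `Q`
meets it in exactly one point. -/
def IsUndetermined (S : Set (PGPoint F)) (ℓ : PGLine F) (Q : PGPoint F) : Prop :=
  ∀ L, L ≠ ℓ → pgMem Q L → nsec (affinePart S ℓ) L = 1

theorem isBlocking_affinePart_union [Finite F] (hZℓ : ∀ Q ∈ Z, pgMem Q ℓ) (hZ : Z.Nonempty)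
    (hund : ∀ Q, pgMem Q ℓ → Q ∉ Z → IsUndetermined S ℓ Q) :
    isBlocking (affinePart S ℓ ∪ Z) := by
  intro L
  obtain rfl | hL := eq_or_ne L ℓ
  · obtain ⟨Q, hQ⟩ := hZ
    exact ⟨Q, Or.inr hQ, hZℓ Q hQ⟩
  · obtain ⟨Q, hQL, hQℓ⟩ := exists_common_point L ℓ
    by_cases hQ : Q ∈ Z
    · exact ⟨Q, Or.inr hQ, hQL⟩
    · obtain ⟨P, hP, hPL⟩ := nsec_pos_iff.mp (hund Q hQℓ hQ L hL hQL ▸ one_pos)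
      exact ⟨P, Or.inl hP, hPL⟩

variable [Fintype F]

theorem isRedeiWithLine_affinePart_union (hS : (affinePart S ℓ).ncard = Fintype.card F)
    (hZℓ : ∀ Q ∈ Z, pgMem Q ℓ) (hZ : Z.ncard ≤ Fintype.card F)
    (hblock : isBlocking (affinePart S ℓ ∪ Z)) :
    isRedeiWithLine (Fintype.card F) (affinePart S ℓ ∪ Z) ℓ := by
  have hdisj : Disjoint (affinePart S ℓ) Z :=
    Set.disjoint_left.mpr fun P hP hPZ => hP.2 (hZℓ P hPZ)
  have hsec : {P ∈ affinePart S ℓ ∪ Z | pgMem P ℓ} = Z := by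
    ext P
    exact ⟨fun ⟨hP, hPℓ⟩ => hP.resolve_left fun h => h.2 hPℓ, fun hP => ⟨Or.inr hP, hZℓ P hP⟩⟩
  have hcard := Set.ncard_union_eq hdisj
  refine ⟨hblock, by lia, ?_⟩
  rw [nsec, hsec]
  lia

theorem sum_nsec_affinePart_pencil_erase [DecidableEq (PGLine F)]
    (hS : (affinePart S ℓ).ncard = Fintype.card F) (hQ : pgMem Q ℓ) :
    ∑ L ∈ (pencil Q).erase ℓ, nsec (affinePart S ℓ) L = ∑ L ∈ (pencil Q).erase ℓ, 1 := by
  have hℓ : nsec (affinePart S ℓ) ℓ = 0 := Nat.eq_zero_of_not_pos fun h => by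
    obtain ⟨P, hP, hPℓ⟩ := nsec_pos_iff.mp h
    exact hP.2 hPℓ
  rw [sum_erase _ hℓ, sum_nsec_pencil fun h => h.2 hQ, hS, ← card_eq_sum_ones,
    card_pencil_erase hQ]

theorem isUndetermined_of_one_le (hS : (affinePart S ℓ).ncard = Fintype.card F)
    (hQ : pgMem Q ℓ) (h : ∀ L, L ≠ ℓ → pgMem Q L → 1 ≤ nsec (affinePart S ℓ) L) :
    IsUndetermined S ℓ Q := by
  classical
  have hone := (sum_eq_sum_iff_of_le fun L hL => h L (ne_of_mem_erase hL)
    (mem_pencil.mp (mem_of_mem_erase hL))).mp (sum_nsec_affinePart_pencil_erase hS hQ).symm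
  exact fun L hL hQL => (hone L (mem_erase.mpr ⟨hL, mem_pencil.mpr hQL⟩)).symm

theorem isUndetermined_of_le_one (hS : (affinePart S ℓ).ncard = Fintype.card F)
    (hQ : pgMem Q ℓ) (h : ∀ L, L ≠ ℓ → pgMem Q L → nsec (affinePart S ℓ) L ≤ 1) :
    IsUndetermined S ℓ Q := by
  classical
  have hone := (sum_eq_sum_iff_of_le fun L hL => h L (ne_of_mem_erase hL)
    (mem_pencil.mp (mem_of_mem_erase hL))).mp (sum_nsec_affinePart_pencil_erase hS hQ)
  exact fun L hL hQL => hone L (mem_erase.mpr ⟨hL, mem_pencil.mpr hQL⟩)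

theorem isMinimalBlocking_affinePart_union (hS : (affinePart S ℓ).ncard = Fintype.card F)
    (hZℓ : ∀ Q ∈ Z, pgMem Q ℓ) (hblock : isBlocking (affinePart S ℓ ∪ Z))
    (hZ : ∀ Q ∈ Z, ¬ IsUndetermined S ℓ Q)
    (hQ : pgMem Q ℓ) (hQZ : Q ∉ Z) (hund : IsUndetermined S ℓ Q) :
    isMinimalBlocking (affinePart S ℓ ∪ Z) := by
  refine ⟨hblock, fun X hX hX' => ?_⟩
  by_cases hXZ : X ∈ Z
  · refine hZ X hXZ (isUndetermined_of_one_le hS (hZℓ X hXZ) fun L hL hXL => nsec_pos_iff.mpr ?_)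
    obtain ⟨P, ⟨hP, hPX⟩, hPL⟩ := hX' L
    exact ⟨P, hP.resolve_right fun h => hPX (point_unique hL hPL (hZℓ P h) hXL (hZℓ X hXZ)), hPL⟩
  · have hXS : X ∈ affinePart S ℓ := hX.resolve_right hXZ
    obtain ⟨L, hXL, hQL⟩ := exists_line_through (P := X) (Q := Q) fun h => hXS.2 (h ▸ hQ)
    have hL : L ≠ ℓ := fun h => hXS.2 (h ▸ hXL)
    obtain ⟨P, ⟨hP | hP, hPX⟩, hPL⟩ := hX' L
    · exact hPX (eq_of_nsec_eq_one (hund L hL hQL) hP hPL hXS hXL)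
    · exact hQZ (point_unique hL hPL (hZℓ P hP) hQL hQ ▸ hP)

end RedeiType

section Semioval

open Finset

variable {F : Type*} [Field F] {S : Set (PGPoint F)} {ℓ L : PGLine F} {R C : PGPoint F}

theorem nsec_sdiff_singleton_add_one [Finite F] (hR : R ∈ S) (hRL : pgMem R L) :
    nsec (S \ {R}) L + 1 = nsec S L := by
  have hsec : {P ∈ S \ {R} | pgMem P L} = {P ∈ S | pgMem P L} \ {R} := by
    ext P
    exact and_right_comm
  rw [nsec, nsec, hsec,
    Set.ncard_sdiff_singleton_add_one (show R ∈ {P ∈ S | pgMem P L} from ⟨hR, hRL⟩)]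

theorem sum_nsec_sdiff_pencil_erase_add_one [Finite F] [DecidableEq (PGLine F)] (hR : R ∈ S)
    {t : PGLine F} (hRt : pgMem R t) (ht : nsec S t = 1) :
    ∑ L ∈ (pencil R).erase t, nsec (S \ {R}) L + 1 = S.ncard := by
  have hzero : nsec (S \ {R}) t = 0 := by
    simpa [ht] using nsec_sdiff_singleton_add_one hR hRt
  rw [sum_erase _ hzero, sum_nsec_pencil fun h => h.2 rfl, Set.ncard_sdiff_singleton_add_one hR]

theorem isSemioval.one_le_nsec_sdiff_of_mem_erase [Finite F] [DecidableEq (PGLine F)]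
    (hS : isSemioval S) (hR : R ∈ S) {t : PGLine F} (hRt : pgMem R t) (ht : nsec S t = 1)
    (hL : L ∈ (pencil R).erase t) : 1 ≤ nsec (S \ {R}) L := by
  obtain ⟨hLt, hRL⟩ := mem_erase.mp hL
  rw [mem_pencil] at hRL
  obtain ⟨Q, hQ, hQR, hQL⟩ := exists_ne_of_nsec_ne_one
    (fun h => hLt ((hS R hR).unique ⟨hRL, h⟩ ⟨hRt, ht⟩)) hR hRL
  exact nsec_pos_iff.mpr ⟨Q, ⟨hQ, hQR⟩, hQL⟩

theorem isSemioval.card_add_one_le_ncard [Fintype F] (hS : isSemioval S) (hne : S.Nonempty) :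
    Fintype.card F + 1 ≤ S.ncard := by
  classical
  obtain ⟨R, hR⟩ := hne
  obtain ⟨t, ⟨hRt, ht⟩, -⟩ := hS R hR
  rw [← sum_nsec_sdiff_pencil_erase_add_one hR hRt ht, ← card_pencil_erase hRt, card_eq_sum_ones]
  gcongr with L hL
  exact hS.one_le_nsec_sdiff_of_mem_erase hR hRt ht hL

theorem isSemioval.nsec_le_two [Fintype F] (hS : isSemioval S)
    (hcard : S.ncard = Fintype.card F + 1) (L : PGLine F) : nsec S L ≤ 2 := by
  classical
  obtain hL | hL := (nsec S L).eq_zero_or_pos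
  · exact hL ▸ zero_le_two
  obtain ⟨R, hR, hRL⟩ := nsec_pos_iff.mp hL
  obtain ⟨t, ⟨hRt, ht⟩, -⟩ := hS R hR
  obtain rfl | hLt := eq_or_ne L t
  · exact ht ▸ one_le_two
  have hsum : ∑ L ∈ (pencil R).erase t, 1 = ∑ L ∈ (pencil R).erase t, nsec (S \ {R}) L := by
    have := sum_nsec_sdiff_pencil_erase_add_one hR hRt ht
    rw [← card_eq_sum_ones, card_pencil_erase hRt]
    lia
  have hone := (sum_eq_sum_iff_of_le fun L hL =>
    hS.one_le_nsec_sdiff_of_mem_erase hR hRt ht hL).mp hsum L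
      (mem_erase.mpr ⟨hLt, mem_pencil.mpr hRL⟩)
  rw [← nsec_sdiff_singleton_add_one hR hRL, ← hone]

/-- The tangents to `S` at its points off `ℓ`. -/
def affineTangents (S : Set (PGPoint F)) (ℓ : PGLine F) : Set (PGLine F) :=
  {t | nsec S t = 1 ∧ ∃ R ∈ S, ¬ pgMem R ℓ ∧ pgMem R t}

/- If `C` were off `ℓ`, sending a point of `S` off `ℓ` to its tangent and a point `R` of `S` on `ℓ`
to the line `RC` would embed `S` into the pencil of `C`. -/
theorem isSemioval.carrier_mem [Fintype F] (hS : isSemioval S)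
    (hcard : Fintype.card F + 1 < S.ncard) (hC : ∀ t ∈ affineTangents S ℓ, pgMem C t) :
    pgMem C ℓ := by
  by_contra hCℓ
  have hline : ∀ R ∈ S, ∃ L, pgMem R L ∧ pgMem C L ∧ (¬ pgMem R ℓ → nsec S L = 1) := by
    intro R hR
    by_cases hRℓ : pgMem R ℓ
    · obtain ⟨L, hRL, hCL⟩ := exists_line_through (P := R) (Q := C) fun h => hCℓ (h ▸ hRℓ)
      exact ⟨L, hRL, hCL, fun h => absurd hRℓ h⟩
    · obtain ⟨t, ⟨hRt, ht⟩, -⟩ := hS R hR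
      exact ⟨t, hRt, hC t ⟨ht, R, hR, hRℓ, hRt⟩, fun _ => ht⟩
  have : Nonempty (PGLine F) := ⟨ℓ⟩
  choose! φ hRφ hCφ hφ using hline
  have hinj : Set.InjOn φ S := by
    intro R hR R' hR' h
    have hR'φ : pgMem R' (φ R) := h ▸ hRφ R' hR'
    by_cases hRℓ : pgMem R ℓ
    · by_cases hR'ℓ : pgMem R' ℓ
      · have hne : φ R ≠ ℓ := fun h => hCℓ (h ▸ hCφ R hR)
        exact point_unique hne (hRφ R hR) hRℓ hR'φ hR'ℓ
      · exact eq_of_nsec_eq_one (h ▸ hφ R' hR' hR'ℓ) hR (hRφ R hR) hR' hR'φ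
    · exact eq_of_nsec_eq_one (hφ R hR hRℓ) hR (hRφ R hR) hR' hR'φ
  have hle := Set.ncard_le_ncard_of_injOn (t := (pencil C : Set (PGLine F))) φ
    (fun R hR => mem_pencil.mpr (hCφ R hR)) hinj (finite_toSet _)
  rw [Set.ncard_coe_finset, card_pencil] at hle
  lia

end Semioval

section SemiovalWithNucleus

/-- A semioval `S` of size `q - 1 + a` that is not an oval, with an `a`-secant `ℓ` whose nucleus
is `N`; here `a = nsec S ℓ`. -/
structure IsSemiovalWithNucleus {F : Type*} [Field F] [Fintype F] (S : Set (PGPoint F))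
    (ℓ : PGLine F) (N : PGPoint F) : Prop where
  isSemioval : isSemioval S
  ncard_add_one : S.ncard + 1 = Fintype.card F + nsec S ℓ
  two_lt_nsec : 2 < nsec S ℓ
  nucleus_mem : ∀ P ∈ S, pgMem P ℓ → ∀ t : PGLine F, pgMem P t → nsec S t = 1 → pgMem N t

namespace IsSemiovalWithNucleus

variable {F : Type*} [Field F] [Fintype F] {S : Set (PGPoint F)} {ℓ L t : PGLine F}
  {N P R Q C : PGPoint F}

theorem nucleus_notMem_line (H : IsSemiovalWithNucleus S ℓ N) : ¬ pgMem N ℓ := by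
  intro hNℓ
  have heq : ∀ P ∈ S, pgMem P ℓ → P = N := by
    intro P hP hPℓ
    obtain ⟨t, ⟨hPt, ht⟩, -⟩ := H.isSemioval P hP
    have htℓ : t ≠ ℓ := by
      rintro rfl
      have := H.two_lt_nsec
      lia
    exact point_unique htℓ hPt hPℓ (H.nucleus_mem P hP hPℓ t hPt ht) hNℓ
  have := nsec_le_one_iff.mpr fun P hP hPℓ Q hQ hQℓ => (heq P hP hPℓ).trans (heq Q hQ hQℓ).symm
  have := H.two_lt_nsec
  lia

theorem exists_mem (H : IsSemiovalWithNucleus S ℓ N) : ∃ P ∈ S, pgMem P ℓ :=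
  nsec_pos_iff.mp (two_pos.trans H.two_lt_nsec)

theorem nucleus_notMem (H : IsSemiovalWithNucleus S ℓ N) : N ∉ S := by
  intro hN
  obtain ⟨P, hP, hPℓ⟩ := H.exists_mem
  obtain ⟨t, ⟨hPt, ht⟩, -⟩ := H.isSemioval P hP
  exact H.nucleus_notMem_line
    (eq_of_nsec_eq_one ht hP hPt hN (H.nucleus_mem P hP hPℓ t hPt ht) ▸ hPℓ)

theorem affinePart_union (H : IsSemiovalWithNucleus S ℓ N) :
    affinePart (S ∪ {N}) ℓ = insert N (affinePart S ℓ) := by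
  ext P
  constructor
  · rintro ⟨hP | rfl, hPℓ⟩
    exacts [Or.inr ⟨hP, hPℓ⟩, Or.inl rfl]
  · rintro (rfl | ⟨hP, hPℓ⟩)
    exacts [⟨Or.inr rfl, H.nucleus_notMem_line⟩, ⟨Or.inl hP, hPℓ⟩]

theorem ncard_affinePart_add_one (H : IsSemiovalWithNucleus S ℓ N) :
    (affinePart S ℓ).ncard + 1 = Fintype.card F := by
  have := nsec_add_ncard_affinePart (S := S) (ℓ := ℓ)
  have := H.ncard_add_one
  lia

theorem ncard_affinePart_union (H : IsSemiovalWithNucleus S ℓ N) :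
    (affinePart (S ∪ {N}) ℓ).ncard = Fintype.card F := by
  rw [H.affinePart_union, Set.ncard_insert_of_notMem fun h => H.nucleus_notMem h.1,
    H.ncard_affinePart_add_one]

theorem exists_notMem_line (H : IsSemiovalWithNucleus S ℓ N) : ∃ R ∈ S, ¬ pgMem R ℓ := by
  have hcard : 0 < (affinePart S ℓ).ncard := by
    have := H.ncard_affinePart_add_one
    have := Fintype.one_lt_card (α := F)
    lia
  exact (Set.ncard_pos).mp hcard

theorem isUndetermined_of_mem (H : IsSemiovalWithNucleus S ℓ N) (hP : P ∈ S) (hPℓ : pgMem P ℓ) :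
    IsUndetermined (S ∪ {N}) ℓ P := by
  refine isUndetermined_of_one_le H.ncard_affinePart_union hPℓ fun L hL hPL => nsec_pos_iff.mpr ?_
  by_cases hL1 : nsec S L = 1
  · exact ⟨N, ⟨Or.inr rfl, H.nucleus_notMem_line⟩, H.nucleus_mem P hP hPℓ L hPL hL1⟩
  · obtain ⟨Q, hQ, hQP, hQL⟩ := exists_ne_of_nsec_ne_one hL1 hP hPL
    exact ⟨Q, ⟨Or.inl hQ, fun hQℓ => hQP (point_unique hL hQL hQℓ hPL hPℓ)⟩, hQL⟩

theorem carrier_of_isUndetermined (H : IsSemiovalWithNucleus S ℓ N) (hQS : Q ∉ S)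
    (hQℓ : pgMem Q ℓ) (hQ : IsUndetermined (S ∪ {N}) ℓ Q) :
    ∀ t ∈ affineTangents S ℓ, pgMem Q t := by
  rintro t ⟨ht, R, hR, hRℓ, hRt⟩
  obtain ⟨L, hRL, hQL⟩ := exists_line_through (P := R) (Q := Q) fun h => hRℓ (h ▸ hQℓ)
  have hL : L ≠ ℓ := fun h => hRℓ (h ▸ hRL)
  have hunique : ∀ P ∈ S, pgMem P L → P = R := fun P hP hPL =>
    eq_of_nsec_eq_one (hQ L hL hQL)
      ⟨Or.inl hP, fun hPℓ => hQS (point_unique hL hPL hPℓ hQL hQℓ ▸ hP)⟩ hPL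
      ⟨Or.inl hR, hRℓ⟩ hRL
  have hL1 : nsec S L = 1 := by_contra fun h => by
    obtain ⟨P, hP, hPR, hPL⟩ := exists_ne_of_nsec_ne_one h hR hRL
    exact hPR (hunique P hP hPL)
  exact (H.isSemioval R hR).unique ⟨hRL, hL1⟩ ⟨hRt, ht⟩ ▸ hQL

theorem carrier_mem_line (H : IsSemiovalWithNucleus S ℓ N)
    (hC : ∀ t ∈ affineTangents S ℓ, pgMem C t) : pgMem C ℓ :=
  H.isSemioval.carrier_mem (by have := H.ncard_add_one; have := H.two_lt_nsec; lia) hC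

theorem isUndetermined_of_carrier (H : IsSemiovalWithNucleus S ℓ N)
    (hN : ∀ t ∈ affineTangents S ℓ, ¬ pgMem N t)
    (hC : ∀ t ∈ affineTangents S ℓ, pgMem C t) : IsUndetermined (S ∪ {N}) ℓ C := by
  have hCℓ := H.carrier_mem_line hC
  have htangent : ∀ R ∈ S, ¬ pgMem R ℓ → ∀ L, pgMem R L → pgMem C L →
      ∀ Q ∈ S ∪ {N}, pgMem Q L → R = Q := by
    intro R hR hRℓ L hRL hCL Q hQ hQL
    obtain ⟨t, ⟨hRt, ht⟩, -⟩ := H.isSemioval R hR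
    have htLL : t ∈ affineTangents S ℓ := ⟨ht, R, hR, hRℓ, hRt⟩
    have hRC : R ≠ C := fun h => hRℓ (h ▸ hCℓ)
    obtain rfl : t = L := line_unique hRC hRt (hC t htLL) hRL hCL
    obtain hQ | rfl := hQ
    · exact eq_of_nsec_eq_one ht hR hRt hQ hQL
    · exact absurd hQL (hN t htLL)
  refine isUndetermined_of_le_one H.ncard_affinePart_union hCℓ fun L hL hCL =>
    nsec_le_one_iff.mpr ?_
  rintro P ⟨hP | rfl, hPℓ⟩ hPL Q hQ hQL
  · exact htangent P hP hPℓ L hPL hCL Q hQ.1 hQL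
  · obtain ⟨hQ | rfl, hQℓ⟩ := hQ
    exacts [(htangent Q hQ hQℓ L hQL hCL P (Or.inr rfl) hPL).symm, rfl]

end IsSemiovalWithNucleus

end SemiovalWithNucleus

section AffineFrame

variable {F : Type*} [Field F]

theorem smul_mem_iff_eq_zero_of_notMem {V : Type*} [AddCommGroup V] [Module F V]
    {W : Submodule F V} {v : V} (hv : v ∉ W) {r : F} : r • v ∈ W ↔ r = 0 :=
  ⟨fun h => by_contra fun hr => hv ((W.smul_mem_iff hr).mp h), by rintro rfl; simp⟩

/-- Homogeneous coordinates on the plane in which `ℓ` is the line at infinity, i.e. the line whose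
points have vanishing `0`-th coordinate. -/
structure AffineFrame (ℓ : PGLine F) where
  toLinearEquiv : (Fin 3 → F) ≃ₗ[F] (Fin 3 → F)
  mem_iff : ∀ v, toLinearEquiv v ∈ ℓ.val ↔ v 0 = 0

namespace AffineFrame

variable {ℓ : PGLine F} (c : AffineFrame ℓ)

/-- The point with homogeneous coordinates `v`. -/
def point (v : Fin 3 → F) (hv : v ≠ 0) : PGPoint F :=
  Projectivization.mk F (c.toLinearEquiv v) (c.toLinearEquiv.map_ne_zero_iff.mpr hv)

/-- The affine point with coordinates `(x, y)`. -/
def aff (x y : F) : PGPoint F :=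
  c.point ![1, x, y] fun h => one_ne_zero (congrFun h 0)

/-- The point at infinity of the lines of slope `d`. -/
def dir (d : F) : PGPoint F :=
  c.point ![0, 1, d] fun h => one_ne_zero (congrFun h 1)

/-- The point at infinity of the vertical lines. -/
def inf : PGPoint F :=
  c.point ![0, 0, 1] fun h => one_ne_zero (congrFun h 2)

theorem pgMem_point {v : Fin 3 → F} (hv : v ≠ 0) (L : PGLine F) :
    pgMem (c.point v hv) L ↔ v ∈ L.val.comap c.toLinearEquiv.toLinearMap :=
  pgMem_mk _ L

theorem pgMem_point_infinity {v : Fin 3 → F} (hv : v ≠ 0) : pgMem (c.point v hv) ℓ ↔ v 0 = 0 :=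
  (pgMem_mk _ ℓ).trans (c.mem_iff v)

theorem point_eq_point_iff {v w : Fin 3 → F} (hv : v ≠ 0) (hw : w ≠ 0) :
    c.point v hv = c.point w hw ↔ ∃ k : F, k • w = v := by
  simp_rw [point, Projectivization.mk_eq_mk_iff', ← map_smul, c.toLinearEquiv.injective.eq_iff]

theorem exists_eq_point (Q : PGPoint F) : ∃ v hv, Q = c.point v hv := by
  induction Q using Projectivization.ind with
  | h w hw =>
    refine ⟨c.toLinearEquiv.symm w, c.toLinearEquiv.symm.map_ne_zero_iff.mpr hw, ?_⟩
    simp only [point, LinearEquiv.apply_symm_apply]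

theorem aff_notMem (x y : F) : ¬ pgMem (c.aff x y) ℓ := fun h =>
  one_ne_zero ((c.pgMem_point_infinity _).mp h)

theorem dir_mem (d : F) : pgMem (c.dir d) ℓ :=
  (c.pgMem_point_infinity _).mpr rfl

theorem inf_mem : pgMem c.inf ℓ :=
  (c.pgMem_point_infinity _).mpr rfl

theorem aff_injective : Function.Injective2 c.aff := by
  intro x x' y y' h
  obtain ⟨k, hk⟩ := (c.point_eq_point_iff _ _).mp h
  have hk₀ : k * 1 = 1 := congrFun hk 0
  have hk₁ : k * x' = x := congrFun hk 1
  have hk₂ : k * y' = y := congrFun hk 2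
  obtain rfl : k = 1 := by simpa using hk₀
  exact ⟨by rw [← hk₁, one_mul], by rw [← hk₂, one_mul]⟩

theorem dir_injective : Function.Injective c.dir := by
  intro d d' h
  obtain ⟨k, hk⟩ := (c.point_eq_point_iff _ _).mp h
  have hk₁ : k * 1 = 1 := congrFun hk 1
  have hk₂ : k * d' = d := congrFun hk 2
  rw [← hk₂, ← mul_one k, hk₁, one_mul]

theorem inf_ne_dir (d : F) : c.inf ≠ c.dir d := by
  intro h
  obtain ⟨k, hk⟩ := (c.point_eq_point_iff _ _).mp h
  have hk₁ : k * 1 = 0 := congrFun hk 1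
  have hk₂ : k * d = 1 := congrFun hk 2
  rw [← mul_one k, hk₁, zero_mul] at hk₂
  exact zero_ne_one hk₂

theorem exists_eq_aff {Q : PGPoint F} (hQ : ¬ pgMem Q ℓ) : ∃ x y, Q = c.aff x y := by
  obtain ⟨v, hv, rfl⟩ := c.exists_eq_point Q
  rw [pgMem_point_infinity] at hQ
  refine ⟨v 1 / v 0, v 2 / v 0, (c.point_eq_point_iff _ _).mpr ⟨v 0, ?_⟩⟩
  ext i
  fin_cases i <;> simp [mul_div_cancel₀ _ hQ]

theorem eq_inf_or_exists_eq_dir {Q : PGPoint F} (hQ : pgMem Q ℓ) :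
    Q = c.inf ∨ ∃ d, Q = c.dir d := by
  obtain ⟨v, hv, rfl⟩ := c.exists_eq_point Q
  rw [pgMem_point_infinity] at hQ
  by_cases hv₁ : v 1 = 0
  · refine Or.inl ((c.point_eq_point_iff _ _).mpr ⟨v 2, ?_⟩)
    ext i
    fin_cases i <;> simp [hQ, hv₁]
  · refine Or.inr ⟨v 2 / v 1, (c.point_eq_point_iff _ _).mpr ⟨v 1, ?_⟩⟩
    ext i
    fin_cases i <;> simp [hQ, mul_div_cancel₀ _ hv₁]

variable {c}

theorem not_inf_mem_and_dir_mem {L : PGLine F} {x y : F} (hL : pgMem (c.aff x y) L) (d : F) :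
    ¬ (pgMem c.inf L ∧ pgMem (c.dir d) L) := fun ⟨hinf, hdir⟩ =>
  c.aff_notMem x y (line_unique (c.inf_ne_dir d) hinf hdir c.inf_mem (c.dir_mem d) ▸ hL)

theorem aff_mem_iff_of_dir_mem {L : PGLine F} {x y d : F} (hL : pgMem (c.aff x y) L)
    (hd : pgMem (c.dir d) L) (x' y' : F) :
    pgMem (c.aff x' y') L ↔ y' - d * x' = y - d * x := by
  have hinf : ¬ pgMem c.inf L := fun h => not_inf_mem_and_dir_mem hL d ⟨h, hd⟩
  have hdecomp : (![1, x', y'] : Fin 3 → F) = ![1, x, y] + (x' - x) • ![0, 1, d] +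
      (y' - d * x' - (y - d * x)) • ![0, 0, 1] := by
    ext i
    fin_cases i <;> simp
    ring
  simp only [aff, dir, inf, pgMem_point] at hL hd hinf ⊢
  rw [hdecomp, Submodule.add_mem_iff_right _ (add_mem hL (Submodule.smul_mem _ _ hd)),
    smul_mem_iff_eq_zero_of_notMem hinf, sub_eq_zero]

theorem aff_mem_iff_of_inf_mem {L : PGLine F} {x y : F} (hL : pgMem (c.aff x y) L)
    (hinf : pgMem c.inf L) (x' y' : F) : pgMem (c.aff x' y') L ↔ x' = x := by
  have hdir : ¬ pgMem (c.dir 0) L := fun h => not_inf_mem_and_dir_mem hL 0 ⟨hinf, h⟩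
  have hdecomp : (![1, x', y'] : Fin 3 → F) = ![1, x, y] + (y' - y) • ![0, 0, 1] +
      (x' - x) • ![0, 1, 0] := by
    ext i
    fin_cases i <;> simp
  simp only [aff, dir, inf, pgMem_point] at hL hdir hinf ⊢
  rw [hdecomp, Submodule.add_mem_iff_right _ (add_mem hL (Submodule.smul_mem _ _ hinf)),
    smul_mem_iff_eq_zero_of_notMem hdir, sub_eq_zero]

end AffineFrame

theorem exists_linearIndependent_of_mem {ℓ : PGLine F} {e : Fin 3 → F} (he0 : e ≠ 0)
    (he : e ∈ ℓ.val) : ∃ u ∉ ℓ.val, ∃ v ∈ ℓ.val, LinearIndependent F ![u, v, e] := by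
  obtain ⟨v, hv, hve⟩ : ∃ v ∈ ℓ.val, v ∉ Submodule.span F {e} := by
    by_contra! hle
    have := Submodule.finrank_mono (show ℓ.val ≤ Submodule.span F {e} from hle)
    rw [ℓ.2, finrank_span_singleton he0] at this
    lia
  obtain ⟨u, hu⟩ : ∃ u, u ∉ ℓ.val := by
    by_contra! htop
    have := ℓ.2
    rw [Submodule.eq_top_iff'.mpr htop, finrank_top, Module.finrank_fin_fun] at this
    lia
  refine ⟨u, hu, v, hv, linearIndependent_finCons.mpr ⟨?_, fun hspan => hu ?_⟩⟩
  · exact linearIndependent_finCons.mpr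
      ⟨LinearIndependent.of_subsingleton 0 (by simpa using he0), by simpa using hve⟩
  · refine Submodule.span_le.mpr ?_ hspan
    rintro x ⟨i, rfl⟩
    fin_cases i
    exacts [hv, he]

theorem exists_affineFrame {ℓ : PGLine F} {P : PGPoint F} (hP : pgMem P ℓ) :
    ∃ c : AffineFrame ℓ, c.inf = P := by
  induction P using Projectivization.ind with
  | h e he0 =>
    have he : e ∈ ℓ.val := (pgMem_mk he0 ℓ).mp hP
    obtain ⟨u, hu, v, hv, hli⟩ := exists_linearIndependent_of_mem he0 he
    let b := basisOfLinearIndependentOfCardEqFinrank hli (by simp)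
    have hb : ∀ w, b.equivFun.symm w = w 0 • u + (w 1 • v + w 2 • e) := fun w => by
      simp [b, Module.Basis.equivFun_symm_apply, Fin.sum_univ_three, add_assoc]
    refine ⟨⟨b.equivFun.symm, fun w => ?_⟩, ?_⟩
    · rw [hb, Submodule.add_mem_iff_left _
        (add_mem (ℓ.val.smul_mem _ hv) (ℓ.val.smul_mem _ he)), smul_mem_iff_eq_zero_of_notMem hu]
    · simp [AffineFrame.inf, AffineFrame.point, hb]

end AffineFrame

section MonicIndicator

open Polynomial Finset

variable {F : Type*} [Field F] [Fintype F]

theorem prod_erase_sub_of_injective [DecidableEq F] {g : F → F} (hg : Function.Injective g)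
    (x : F) : ∏ y ∈ univ.erase x, (g x - g y) = -1 := by
  let e : F ≃ F :=
    (Equiv.ofBijective g (Finite.injective_iff_bijective.mp hg)).trans (Equiv.subLeft (g x))
  have he : ∀ y, y ∈ univ.erase x ↔ e y ∈ univ.erase 0 := fun y => by
    simp [e, sub_eq_zero, hg.eq_iff, eq_comm]
  have hunits : ∀ z ∈ univ.erase (0 : F), ∃ u, ∃ _ : u ∈ (univ : Finset Fˣ), (u : F) = z :=
    fun z hz => ⟨Units.mk0 z (ne_of_mem_erase hz), mem_univ _, rfl⟩
  calc ∏ y ∈ univ.erase x, (g x - g y) = ∏ z ∈ univ.erase (0 : F), z :=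
        prod_equiv e he fun _ _ => rfl
    _ = ∏ u : Fˣ, (u : F) :=
        (prod_bij (fun (u : Fˣ) _ => (u : F)) (fun u _ => mem_erase.mpr ⟨u.ne_zero, mem_univ _⟩)
          (fun _ _ _ _ => Units.ext) hunits fun _ _ => rfl).symm
    _ = -1 := by simp [← Units.coe_prod, FiniteField.prod_univ_units_id_eq_neg_one]

theorem sum_eval_eq_neg_coeff {G : F[X]} (hG : G.degree < Fintype.card F) :
    ∑ d, G.eval d = -G.coeff (Fintype.card F - 1) := by
  classical
  have h := Lagrange.coeff_eq_sum (s := univ) Function.injective_id.injOn hG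
  simp_rw [prod_erase_sub_of_injective Function.injective_id, div_neg, div_one,
    sum_neg_distrib, card_univ, id_eq] at h
  rw [h, neg_neg]

theorem sum_eval_div_sub_eq_zero_of_sq_dvd {G : F[X]} {t : F} (hG : G.degree < Fintype.card F)
    (ht : (X - C t) ^ 2 ∣ G) : ∑ d, G.eval d / (d - t) = 0 := by
  obtain ⟨K, rfl⟩ := ht
  have hquot : ∀ d, ((X - C t) ^ 2 * K).eval d / (d - t) = ((X - C t) * K).eval d := fun d => by
    obtain rfl | hd := eq_or_ne d t
    · simp
    · have := sub_ne_zero.mpr hd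
      simp only [eval_mul, eval_pow, eval_sub, eval_X, eval_C]
      field_simp
  have hdeg : ((X - C t) * K).degree + 1 < (Fintype.card F : WithBot ℕ) := by
    rwa [pow_two, mul_assoc, degree_mul, degree_X_sub_C, add_comm] at hG
  have hle : ((X - C t) * K).degree < (Fintype.card F : WithBot ℕ) :=
    (le_add_of_nonneg_right zero_le_one).trans_lt hdeg
  have hcoeff : ((X - C t) * K).coeff (Fintype.card F - 1) = 0 := by
    refine coeff_eq_zero_of_degree_lt (lt_of_add_lt_add_right (a := 1) ?_)
    rwa [← Nat.cast_one, ← Nat.cast_add, Nat.sub_add_cancel Fintype.card_pos]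
  simp_rw [hquot, sum_eval_eq_neg_coeff hle, hcoeff, neg_zero]

/-- `G` is monic of degree `q - 1` and agrees with the indicator function of `A` away from the
point `m ∉ A`. The polynomials whose roots are the slopes of the secants of a graph through one of
its points have this shape when the point lies on a tangent of slope `m` and `A` consists of slopes
of no secant. -/
structure IsMonicIndicatorOff (A : Finset F) (m : F) (G : F[X]) : Prop where
  monic : G.Monic
  natDegree_eq : G.natDegree = Fintype.card F - 1
  notMem : m ∉ A
  eval_eq_one : ∀ d ∈ A, G.eval d = 1
  eval_eq_zero : ∀ d ∉ A, d ≠ m → G.eval d = 0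

namespace IsMonicIndicatorOff

variable {A : Finset F} {m m' t : F} {G G' : F[X]}

theorem degree_lt (hG : IsMonicIndicatorOff A m G) : G.degree < Fintype.card F := by
  rw [degree_eq_natDegree hG.monic.ne_zero, hG.natDegree_eq]
  exact_mod_cast Nat.sub_lt Fintype.card_pos one_pos

theorem sum_eval_mul (hG : IsMonicIndicatorOff A m G) (w : F → F) :
    ∑ d, G.eval d * w d = ∑ d ∈ A, w d + G.eval m * w m := by
  classical
  rw [← sum_subset (subset_univ (insert m A)), sum_insert hG.notMem, add_comm]
  · congr 1
    exact sum_congr rfl fun d hd => by rw [hG.eval_eq_one d hd, one_mul]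
  · intro d _ hd
    rw [mem_insert, not_or] at hd
    rw [hG.eval_eq_zero d hd.2 hd.1, zero_mul]

theorem eval_self (hG : IsMonicIndicatorOff A m G) : G.eval m = -((#A + 1 : ℕ) : F) := by
  have hsum := hG.sum_eval_mul 1
  simp only [Pi.one_apply, mul_one, sum_eval_eq_neg_coeff hG.degree_lt, ← hG.natDegree_eq,
    hG.monic.coeff_natDegree, sum_const, nsmul_eq_mul] at hsum
  push_cast
  linear_combination -hsum

theorem unique (hG : IsMonicIndicatorOff A m G) (hG' : IsMonicIndicatorOff A m G') : G = G' := by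
  refine eq_of_degrees_lt_of_eval_finset_eq univ hG.degree_lt hG'.degree_lt fun d _ => ?_
  by_cases hd : d ∈ A
  · rw [hG.eval_eq_one d hd, hG'.eval_eq_one d hd]
  · obtain rfl | hdm := eq_or_ne d m
    · rw [hG.eval_self, hG'.eval_self]
    · rw [hG.eval_eq_zero d hd hdm, hG'.eval_eq_zero d hd hdm]

theorem sum_inv_sub_of_sq_dvd (hG : IsMonicIndicatorOff A m G) (ht : (X - C t) ^ 2 ∣ G) :
    ∑ d ∈ A, (d - t)⁻¹ = ((#A + 1 : ℕ) : F) * (m - t)⁻¹ := by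
  have hsum := hG.sum_eval_mul fun d => (d - t)⁻¹
  simp_rw [← div_eq_mul_inv, sum_eval_div_sub_eq_zero_of_sq_dvd hG.degree_lt ht, hG.eval_self]
    at hsum
  linear_combination -hsum

theorem eq_of_sq_dvd (hG : IsMonicIndicatorOff A m G) (hG' : IsMonicIndicatorOff A m' G')
    (hA : ((#A + 1 : ℕ) : F) ≠ 0) (ht : (X - C t) ^ 2 ∣ G) (ht' : (X - C t) ^ 2 ∣ G') :
    m = m' :=
  sub_left_injective <| inv_injective <| mul_left_cancel₀ hA <|
    (hG.sum_inv_sub_of_sq_dvd ht).symm.trans (hG'.sum_inv_sub_of_sq_dvd ht')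

end IsMonicIndicatorOff

end MonicIndicator

section SlopePoly

open Polynomial Finset

variable {F : Type*} [Field F]

theorem slope_eq_iff_of_ne (f : F → F) {x y : F} (hyx : y ≠ x) (d : F) :
    slope f x y = d ↔ f y - d * y = f x - d * x := by
  rw [slope_def_field, div_eq_iff (sub_ne_zero.mpr hyx)]
  constructor <;> intro h <;> linear_combination h

variable [Fintype F] [DecidableEq F]

/-- The monic polynomial whose roots are the slopes of the secants through the point of abscissa `x`
of the graph of `f`, counted with multiplicity. -/
noncomputable def slopePoly (f : F → F) (x : F) : F[X] :=
  Lagrange.nodal (univ.erase x) (slope f x)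

theorem natDegree_slopePoly (f : F → F) (x : F) :
    (slopePoly f x).natDegree = Fintype.card F - 1 := by
  rw [slopePoly, Lagrange.natDegree_nodal, card_erase_of_mem (mem_univ x), card_univ]

theorem eval_slopePoly_of_injective {f : F → F} {d : F}
    (hf : Function.Injective fun y => f y - d * y) (x : F) : (slopePoly f x).eval d = 1 := by
  calc (slopePoly f x).eval d
      = ∏ y ∈ univ.erase x, ((f x - d * x) - (f y - d * y)) / (-x - -y) := by
        rw [slopePoly, Lagrange.eval_nodal]
        refine prod_congr rfl fun y hy => ?_
        have hsub : y - x ≠ 0 := sub_ne_zero.mpr (ne_of_mem_erase hy)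
        rw [slope_def_field, show -x - -y = y - x by ring]
        field_simp
        ring
    _ = 1 := by
        rw [prod_div_distrib, prod_erase_sub_of_injective hf,
          prod_erase_sub_of_injective neg_injective, div_self (neg_ne_zero.mpr one_ne_zero)]

theorem rootMultiplicity_slopePoly_add_one (f : F → F) (x d : F) :
    (slopePoly f x).rootMultiplicity d + 1 = #{y | f y - d * y = f x - d * x} := by
  have hroots : (slopePoly f x).roots = (univ.erase x).val.map (slope f x) := by
    rw [← roots_multiset_prod_X_sub_C ((univ.erase x).val.map (slope f x)), Multiset.map_map]
    rfl
  have hx : x ∈ ({y | f y - d * y = f x - d * x} : Finset F) := by simp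
  rw [← count_roots, hroots, Multiset.count_map, ← card_erase_add_one hx, ← filter_val, card_val]
  congr 2
  ext y
  simp only [mem_filter, mem_erase, mem_univ, and_true, true_and, and_congr_right_iff]
  exact fun hyx => eq_comm.trans (slope_eq_iff_of_ne f hyx d)

end SlopePoly

section Graph

open Finset

namespace AffineFrame

variable {F : Type*} [Field F] {ℓ L : PGLine F} (c : AffineFrame ℓ) {f : F → F}
  {S : Set (PGPoint F)} {x d : F}

/-- The graph of `f` in the affine coordinates `c`. -/
def graph (f : F → F) : Set (PGPoint F) :=
  Set.range fun x => c.aff x (f x)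

variable {c}

theorem injective_aff_graph (f : F → F) : Function.Injective fun x => c.aff x (f x) :=
  fun _ _ h => (c.aff_injective h).1

theorem exists_affinePart_eq_graph [Finite F] (h : IsUndetermined S ℓ c.inf) :
    ∃ f, affinePart S ℓ = c.graph f := by
  have hvertical : ∀ x, ∃ L, L ≠ ℓ ∧ pgMem c.inf L ∧ ∀ x' y, pgMem (c.aff x' y) L ↔ x' = x := by
    intro x
    obtain ⟨L, hL, hinf⟩ := exists_line_through (P := c.aff x 0) (Q := c.inf)
      fun h => c.aff_notMem x 0 (h ▸ c.inf_mem)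
    exact ⟨L, fun h => c.aff_notMem x 0 (h ▸ hL), hinf, aff_mem_iff_of_inf_mem hL hinf⟩
  have hexists : ∀ x, ∃ y, c.aff x y ∈ affinePart S ℓ := by
    intro x
    obtain ⟨L, hLℓ, hinf, hL⟩ := hvertical x
    obtain ⟨P, hP, hPL⟩ := nsec_pos_iff.mp (h L hLℓ hinf ▸ one_pos)
    obtain ⟨x', y, rfl⟩ := c.exists_eq_aff hP.2
    exact ⟨y, (hL x' y).mp hPL ▸ hP⟩
  choose f hf using hexists
  refine ⟨f, Set.Subset.antisymm (fun P hP => ?_) (Set.range_subset_iff.mpr hf)⟩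
  obtain ⟨x, y, rfl⟩ := c.exists_eq_aff hP.2
  obtain ⟨L, hLℓ, hinf, hL⟩ := hvertical x
  exact ⟨x, eq_of_nsec_eq_one (h L hLℓ hinf) (hf x) ((hL _ _).mpr rfl) hP ((hL _ _).mpr rfl)⟩

theorem nsec_graph [Fintype F] [DecidableEq F] (hL : pgMem (c.aff x (f x)) L)
    (hd : pgMem (c.dir d) L) :
    nsec (c.graph f) L = (slopePoly f x).rootMultiplicity d + 1 := by
  have hsec : {P ∈ c.graph f | pgMem P L} = (fun y => c.aff y (f y)) ''
      ({y | f y - d * y = f x - d * x} : Finset F) := by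
    ext P
    constructor
    · rintro ⟨⟨y, rfl⟩, hy⟩
      exact ⟨y, by simpa using (aff_mem_iff_of_dir_mem hL hd y (f y)).mp hy, rfl⟩
    · rintro ⟨y, hy, rfl⟩
      exact ⟨⟨y, rfl⟩, (aff_mem_iff_of_dir_mem hL hd y (f y)).mpr (by simpa using hy)⟩
  rw [rootMultiplicity_slopePoly_add_one, nsec, hsec,
    Set.ncard_image_of_injective _ (injective_aff_graph f), Set.ncard_coe_finset]

theorem injective_of_isUndetermined [Finite F] (hf : affinePart S ℓ = c.graph f)
    (h : IsUndetermined S ℓ (c.dir d)) : Function.Injective fun y => f y - d * y := by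
  intro x y hxy
  obtain ⟨L, hL, hd⟩ := exists_line_through (P := c.aff x (f x)) (Q := c.dir d)
    fun h => c.aff_notMem x (f x) (h ▸ c.dir_mem d)
  have hLℓ : L ≠ ℓ := fun h => c.aff_notMem x (f x) (h ▸ hL)
  have hone := hf ▸ h L hLℓ hd
  exact injective_aff_graph f (eq_of_nsec_eq_one hone ⟨x, rfl⟩ hL ⟨y, rfl⟩
    ((aff_mem_iff_of_dir_mem hL hd y (f y)).mpr hxy.symm))

variable [Fintype F]

open Classical in
/-- The slopes of the points of `S` on the line at infinity other than `c.inf`. -/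
noncomputable def slopes (c : AffineFrame ℓ) (S : Set (PGPoint F)) : Finset F :=
  {d | c.dir d ∈ S}

theorem mem_slopes : d ∈ c.slopes S ↔ c.dir d ∈ S := by
  simp [slopes]

theorem card_slopes_add_one (hinf : c.inf ∈ S) : #(c.slopes S) + 1 = nsec S ℓ := by
  have hsec : {P ∈ S | pgMem P ℓ} = insert c.inf (c.dir '' c.slopes S) := by
    ext P
    constructor
    · rintro ⟨hP, hPℓ⟩
      obtain rfl | ⟨d, rfl⟩ := c.eq_inf_or_exists_eq_dir hPℓ
      exacts [Or.inl rfl, Or.inr ⟨d, mem_slopes.mpr hP, rfl⟩]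
    · rintro (rfl | ⟨d, hd, rfl⟩)
      exacts [⟨hinf, c.inf_mem⟩, ⟨mem_slopes.mp hd, c.dir_mem d⟩]
  have hnotMem : c.inf ∉ c.dir '' c.slopes S := by
    rintro ⟨d, -, hd⟩
    exact c.inf_ne_dir d hd.symm
  rw [nsec, hsec, Set.ncard_insert_of_notMem hnotMem,
    Set.ncard_image_of_injective _ c.dir_injective, Set.ncard_coe_finset]

theorem exists_dir_mem_tangent {R : PGPoint F} (hinf : c.inf ∈ S) (hR : R ∈ S)
    (hRℓ : ¬ pgMem R ℓ) {t : PGLine F} (hRt : pgMem R t) (ht : nsec S t = 1) :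
    ∃ m ∉ c.slopes S, pgMem (c.dir m) t := by
  have hnotMem : ∀ M ∈ S, pgMem M ℓ → ¬ pgMem M t := fun M hM hMℓ hMt =>
    hRℓ (eq_of_nsec_eq_one ht hM hMt hR hRt ▸ hMℓ)
  obtain ⟨M, hMt, hMℓ⟩ := exists_common_point t ℓ
  obtain rfl | ⟨m, rfl⟩ := c.eq_inf_or_exists_eq_dir hMℓ
  · exact absurd hMt (hnotMem _ hinf hMℓ)
  · exact ⟨m, fun hm => hnotMem _ (mem_slopes.mp hm) hMℓ hMt, hMt⟩

end AffineFrame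

end Graph

section TangentSlopes

open Polynomial

namespace IsSemiovalWithNucleus

variable {F : Type*} [Field F] [Fintype F] {S : Set (PGPoint F)}
  {ℓ L L₁ L₂ K₁ K₂ t t₁ t₂ : PGLine F} {N M R R₁ R₂ T : PGPoint F}
  {c : AffineFrame ℓ} {f : F → F} {x x₁ x₂ : F}

theorem exists_graph (H : IsSemiovalWithNucleus S ℓ N) :
    ∃ c : AffineFrame ℓ, ∃ f, c.inf ∈ S ∧ affinePart (S ∪ {N}) ℓ = c.graph f := by
  obtain ⟨P, hP, hPℓ⟩ := H.exists_mem
  obtain ⟨c, rfl⟩ := exists_affineFrame hPℓ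
  obtain ⟨f, hf⟩ := AffineFrame.exists_affinePart_eq_graph (H.isUndetermined_of_mem hP hPℓ)
  exact ⟨c, f, hP, hf⟩

theorem notMem_of_three_le_nsec (H : IsSemiovalWithNucleus S ℓ N) (hTℓ : pgMem T ℓ)
    (hTL : pgMem T L) (hL : L ≠ ℓ) (h : 3 ≤ nsec (S ∪ {N}) L) : T ∉ S := by
  intro hT
  have hle := Set.ncard_inter_le_ncard_right (S ∪ {N}) {T}
  rw [Set.ncard_singleton] at hle
  rw [nsec_eq_nsec_affinePart_add hL hTL hTℓ, H.isUndetermined_of_mem hT hTℓ L hL hTL] at h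
  lia

section SlopePoly

variable [DecidableEq F]

theorem eval_slopePoly_eq_zero_of_notMem (H : IsSemiovalWithNucleus S ℓ N)
    (hf : affinePart (S ∪ {N}) ℓ = c.graph f) (hx : c.aff x (f x) ∈ S)
    (hxt : pgMem (c.aff x (f x)) t) (ht : nsec S t = 1) {m d : F} (hm : pgMem (c.dir m) t)
    (hd : d ∉ c.slopes S) (hdm : d ≠ m) : (slopePoly f x).eval d = 0 := by
  have hxℓ := c.aff_notMem x (f x)
  obtain ⟨L, hxL, hdL⟩ := exists_line_through (P := c.aff x (f x)) (Q := c.dir d)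
    fun h => hxℓ (h ▸ c.dir_mem d)
  have hLℓ : L ≠ ℓ := fun h => hxℓ (h ▸ hxL)
  have hL : nsec S L ≠ 1 := by
    intro hL
    obtain rfl := (H.isSemioval _ hx).unique ⟨hxL, hL⟩ ⟨hxt, ht⟩
    exact hdm (c.dir_injective (point_unique hLℓ hdL (c.dir_mem d) hm (c.dir_mem m)))
  obtain ⟨Q, hQ, hQx, hQL⟩ := exists_ne_of_nsec_ne_one hL hx hxL
  have hQℓ : ¬ pgMem Q ℓ := fun hQℓ =>
    hd (AffineFrame.mem_slopes.mpr (point_unique hLℓ hQL hQℓ hdL (c.dir_mem d) ▸ hQ))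
  have hgraph : Q ∈ c.graph f := hf ▸ ⟨Or.inl hQ, hQℓ⟩
  by_contra hroot
  have hmult := AffineFrame.nsec_graph hxL hdL
  rw [rootMultiplicity_eq_zero hroot, zero_add] at hmult
  exact hQx (eq_of_nsec_eq_one hmult hgraph hQL ⟨x, rfl⟩ hxL)

theorem exists_isMonicIndicatorOff (H : IsSemiovalWithNucleus S ℓ N) (hinf : c.inf ∈ S)
    (hf : affinePart (S ∪ {N}) ℓ = c.graph f) (hx : c.aff x (f x) ∈ S)
    (hxt : pgMem (c.aff x (f x)) t) (ht : nsec S t = 1) :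
    ∃ m, pgMem (c.dir m) t ∧ IsMonicIndicatorOff (c.slopes S) m (slopePoly f x) := by
  obtain ⟨m, hmS, hmt⟩ := AffineFrame.exists_dir_mem_tangent hinf hx (c.aff_notMem x (f x)) hxt ht
  refine ⟨m, hmt, Lagrange.nodal_monic, natDegree_slopePoly f x, hmS, fun d hd => ?_,
    fun d hd hdm => H.eval_slopePoly_eq_zero_of_notMem hf hx hxt ht hmt hd hdm⟩
  exact eval_slopePoly_of_injective (AffineFrame.injective_of_isUndetermined hf
    (H.isUndetermined_of_mem (AffineFrame.mem_slopes.mp hd) (c.dir_mem d))) x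

theorem nsec_eq_of_slopePoly_eq (H : IsSemiovalWithNucleus S ℓ N) (hinf : c.inf ∈ S)
    (hf : affinePart (S ∪ {N}) ℓ = c.graph f) (hpoly : slopePoly f x₁ = slopePoly f x₂)
    (hMℓ : pgMem M ℓ) (h₁ : pgMem (c.aff x₁ (f x₁)) L₁) (hM₁ : pgMem M L₁)
    (h₂ : pgMem (c.aff x₂ (f x₂)) L₂) (hM₂ : pgMem M L₂) :
    nsec (S ∪ {N}) L₁ = nsec (S ∪ {N}) L₂ := by
  have hL₁ : L₁ ≠ ℓ := fun h => c.aff_notMem x₁ (f x₁) (h ▸ h₁)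
  have hL₂ : L₂ ≠ ℓ := fun h => c.aff_notMem x₂ (f x₂) (h ▸ h₂)
  rw [nsec_eq_nsec_affinePart_add hL₁ hM₁ hMℓ, nsec_eq_nsec_affinePart_add hL₂ hM₂ hMℓ]
  congr 1
  obtain rfl | ⟨d, rfl⟩ := c.eq_inf_or_exists_eq_dir hMℓ
  · have hund := H.isUndetermined_of_mem hinf hMℓ
    rw [hund L₁ hL₁ hM₁, hund L₂ hL₂ hM₂]
  · rw [hf, AffineFrame.nsec_graph h₁ hM₁, AffineFrame.nsec_graph h₂ hM₂, hpoly]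

theorem sq_dvd_slopePoly (H : IsSemiovalWithNucleus S ℓ N)
    (hf : affinePart (S ∪ {N}) ℓ = c.graph f) (hx : pgMem (c.aff x (f x)) L) {d : F}
    (hd : pgMem (c.dir d) L) (h : 3 ≤ nsec (S ∪ {N}) L) : (X - C d) ^ 2 ∣ slopePoly f x := by
  have hL : L ≠ ℓ := fun h => c.aff_notMem x (f x) (h ▸ hx)
  have hdS : c.dir d ∉ S := H.notMem_of_three_le_nsec (c.dir_mem d) hd hL h
  have hdN : c.dir d ≠ N := fun h => H.nucleus_notMem_line (h ▸ c.dir_mem d)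
  have hempty : (S ∪ {N}) ∩ {c.dir d} = ∅ :=
    Set.inter_singleton_eq_empty.mpr fun h => h.elim hdS hdN
  rw [nsec_eq_nsec_affinePart_add hL hd (c.dir_mem d), hempty, Set.ncard_empty, hf,
    AffineFrame.nsec_graph hx hd] at h
  have hne : slopePoly f x ≠ 0 := Lagrange.nodal_ne_zero
  exact (le_rootMultiplicity_iff hne).mp (by lia)

end SlopePoly

theorem nucleus_mem_tangent_iff (H : IsSemiovalWithNucleus S ℓ N) (hR : R ∈ S)
    (hRℓ : ¬ pgMem R ℓ) (hRt : pgMem R t) (ht : nsec S t = 1) :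
    pgMem N t ↔ (nsec S ℓ : F) = 0 := by
  classical
  obtain ⟨c, f, hinf, hf⟩ := H.exists_graph
  obtain ⟨x, rfl⟩ : ∃ x, c.aff x (f x) = R := hf.subset ⟨Or.inl hR, hRℓ⟩
  obtain ⟨m, hmt, hm⟩ := H.exists_isMonicIndicatorOff hinf hf hR hRt ht
  calc pgMem N t
      ↔ nsec (affinePart (S ∪ {N}) ℓ) t ≠ 1 := by
        refine ⟨fun hNt h => H.nucleus_notMem ?_, fun h => ?_⟩
        · exact eq_of_nsec_eq_one h ⟨Or.inl hR, hRℓ⟩ hRt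
            ⟨Or.inr rfl, H.nucleus_notMem_line⟩ hNt ▸ hR
        · obtain ⟨Q, ⟨hQ | rfl, -⟩, hQR, hQt⟩ :=
            exists_ne_of_nsec_ne_one h ⟨Or.inl hR, hRℓ⟩ hRt
          exacts [absurd (eq_of_nsec_eq_one ht hQ hQt hR hRt) hQR, hQt]
    _ ↔ (slopePoly f x).eval m = 0 := by
        rw [hf, AffineFrame.nsec_graph hRt hmt, Ne, Nat.add_eq_right, ← Ne,
          ← Nat.pos_iff_ne_zero, rootMultiplicity_pos hm.monic.ne_zero, IsRoot.def]
    _ ↔ (nsec S ℓ : F) = 0 := by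
        rw [hm.eval_self, neg_eq_zero, AffineFrame.card_slopes_add_one hinf]

theorem natCast_nsec_ne_zero (H : IsSemiovalWithNucleus S ℓ N) : (nsec S ℓ : F) ≠ 0 := by
  intro h
  refine H.nucleus_notMem_line (H.carrier_mem_line ?_)
  rintro t ⟨ht, R, hR, hRℓ, hRt⟩
  exact (H.nucleus_mem_tangent_iff hR hRℓ hRt ht).mpr h

theorem nucleus_notMem_tangent (H : IsSemiovalWithNucleus S ℓ N) :
    ∀ t ∈ affineTangents S ℓ, ¬ pgMem N t := by
  rintro t ⟨ht, R, hR, hRℓ, hRt⟩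
  rw [H.nucleus_mem_tangent_iff hR hRℓ hRt ht]
  exact H.natCast_nsec_ne_zero

theorem nsec_eq_of_tangents_meet (H : IsSemiovalWithNucleus S ℓ N) (hR₁ : R₁ ∈ S)
    (hR₁ℓ : ¬ pgMem R₁ ℓ) (hR₂ : R₂ ∈ S) (hR₂ℓ : ¬ pgMem R₂ ℓ)
    (hRt₁ : pgMem R₁ t₁) (ht₁ : nsec S t₁ = 1) (hRt₂ : pgMem R₂ t₂) (ht₂ : nsec S t₂ = 1)
    (hTt₁ : pgMem T t₁) (hTt₂ : pgMem T t₂) (hTℓ : pgMem T ℓ)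
    (hMℓ : pgMem M ℓ) (hRL₁ : pgMem R₁ L₁) (hML₁ : pgMem M L₁) (hRL₂ : pgMem R₂ L₂)
    (hML₂ : pgMem M L₂) : nsec (S ∪ {N}) L₁ = nsec (S ∪ {N}) L₂ := by
  classical
  obtain ⟨c, f, hinf, hf⟩ := H.exists_graph
  obtain ⟨x₁, rfl⟩ : ∃ x, c.aff x (f x) = R₁ := hf.subset ⟨Or.inl hR₁, hR₁ℓ⟩
  obtain ⟨x₂, rfl⟩ : ∃ x, c.aff x (f x) = R₂ := hf.subset ⟨Or.inl hR₂, hR₂ℓ⟩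
  obtain ⟨m₁, hm₁, hG₁⟩ := H.exists_isMonicIndicatorOff hinf hf hR₁ hRt₁ ht₁
  obtain ⟨m₂, hm₂, hG₂⟩ := H.exists_isMonicIndicatorOff hinf hf hR₂ hRt₂ ht₂
  have ht₁ℓ : t₁ ≠ ℓ := fun h => hR₁ℓ (h ▸ hRt₁)
  have ht₂ℓ : t₂ ≠ ℓ := fun h => hR₂ℓ (h ▸ hRt₂)
  obtain rfl : m₁ = m₂ := c.dir_injective
    ((point_unique ht₁ℓ hm₁ (c.dir_mem m₁) hTt₁ hTℓ).trans
      (point_unique ht₂ℓ hTt₂ hTℓ hm₂ (c.dir_mem m₂)))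
  exact H.nsec_eq_of_slopePoly_eq hinf hf (hG₁.unique hG₂) hMℓ hRL₁ hML₁ hRL₂ hML₂

theorem tangents_meet_of_three_le_nsec (H : IsSemiovalWithNucleus S ℓ N) (hR₁ : R₁ ∈ S)
    (hR₁ℓ : ¬ pgMem R₁ ℓ) (hR₂ : R₂ ∈ S) (hR₂ℓ : ¬ pgMem R₂ ℓ)
    (hRt₁ : pgMem R₁ t₁) (ht₁ : nsec S t₁ = 1) (hRt₂ : pgMem R₂ t₂) (ht₂ : nsec S t₂ = 1)
    (hTℓ : pgMem T ℓ)
    (hRK₁ : pgMem R₁ K₁) (hTK₁ : pgMem T K₁) (hK₁ : 3 ≤ nsec (S ∪ {N}) K₁)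
    (hRK₂ : pgMem R₂ K₂) (hTK₂ : pgMem T K₂) (hK₂ : 3 ≤ nsec (S ∪ {N}) K₂) :
    ∃ Q, pgMem Q t₁ ∧ pgMem Q t₂ ∧ pgMem Q ℓ := by
  classical
  obtain ⟨c, f, hinf, hf⟩ := H.exists_graph
  obtain ⟨x₁, rfl⟩ : ∃ x, c.aff x (f x) = R₁ := hf.subset ⟨Or.inl hR₁, hR₁ℓ⟩
  obtain ⟨x₂, rfl⟩ : ∃ x, c.aff x (f x) = R₂ := hf.subset ⟨Or.inl hR₂, hR₂ℓ⟩
  obtain ⟨m₁, hm₁, hG₁⟩ := H.exists_isMonicIndicatorOff hinf hf hR₁ hRt₁ ht₁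
  obtain ⟨m₂, hm₂, hG₂⟩ := H.exists_isMonicIndicatorOff hinf hf hR₂ hRt₂ ht₂
  have hTS := H.notMem_of_three_le_nsec hTℓ hTK₁ (fun h => hR₁ℓ (h ▸ hRK₁)) hK₁
  obtain rfl | ⟨d, rfl⟩ := c.eq_inf_or_exists_eq_dir hTℓ
  · exact absurd hinf hTS
  have ha := H.natCast_nsec_ne_zero
  rw [← AffineFrame.card_slopes_add_one hinf] at ha
  obtain rfl := hG₁.eq_of_sq_dvd hG₂ ha (H.sq_dvd_slopePoly hf hRK₁ hTK₁ hK₁)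
    (H.sq_dvd_slopePoly hf hRK₂ hTK₂ hK₂)
  exact ⟨c.dir m₁, hm₁, hm₂, c.dir_mem m₁⟩

theorem nsec_eq_of_three_le_nsec (H : IsSemiovalWithNucleus S ℓ N) (hR₁ : R₁ ∈ S)
    (hR₁ℓ : ¬ pgMem R₁ ℓ) (hR₂ : R₂ ∈ S) (hR₂ℓ : ¬ pgMem R₂ ℓ) (hTℓ : pgMem T ℓ)
    (hRK₁ : pgMem R₁ K₁) (hTK₁ : pgMem T K₁) (hK₁ : 3 ≤ nsec (S ∪ {N}) K₁)
    (hRK₂ : pgMem R₂ K₂) (hTK₂ : pgMem T K₂) (hK₂ : 3 ≤ nsec (S ∪ {N}) K₂)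
    (hMℓ : pgMem M ℓ) (hRL₁ : pgMem R₁ L₁) (hML₁ : pgMem M L₁) (hRL₂ : pgMem R₂ L₂)
    (hML₂ : pgMem M L₂) : nsec (S ∪ {N}) L₁ = nsec (S ∪ {N}) L₂ := by
  obtain ⟨t₁, ⟨hRt₁, ht₁⟩, -⟩ := H.isSemioval R₁ hR₁
  obtain ⟨t₂, ⟨hRt₂, ht₂⟩, -⟩ := H.isSemioval R₂ hR₂
  obtain ⟨Q, hQt₁, hQt₂, hQℓ⟩ := H.tangents_meet_of_three_le_nsec hR₁ hR₁ℓ hR₂ hR₂ℓ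
    hRt₁ ht₁ hRt₂ ht₂ hTℓ hRK₁ hTK₁ hK₁ hRK₂ hTK₂ hK₂
  exact H.nsec_eq_of_tangents_meet hR₁ hR₁ℓ hR₂ hR₂ℓ hRt₁ ht₁ hRt₂ ht₂ hQt₁ hQt₂ hQℓ
    hMℓ hRL₁ hML₁ hRL₂ hML₂

end IsSemiovalWithNucleus

end TangentSlopes

section BlockingSet

variable {F : Type*} [Field F] [Fintype F] {S : Set (PGPoint F)} {ℓ : PGLine F}
  {N C : PGPoint F}

theorem nsec_add_ncard_setOf_pgMem_sdiff :
    nsec S ℓ + ({P | pgMem P ℓ} \ S).ncard = Fintype.card F + 1 := by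
  rw [← ncard_setOf_pgMem ℓ, ← Set.ncard_inter_add_ncard_sdiff_eq_ncard {P | pgMem P ℓ} S,
    Set.inter_comm]
  rfl

namespace IsSemiovalWithNucleus

theorem union_symmDiff_eq (H : IsSemiovalWithNucleus S ℓ N) :
    {N} ∪ ((S \ {P | pgMem P ℓ}) ∪ ({P | pgMem P ℓ} \ S)) =
      affinePart (S ∪ {N}) ℓ ∪ ({P | pgMem P ℓ} \ S) := by
  rw [H.affinePart_union, Set.insert_eq, Set.union_assoc]
  rfl

theorem nsec_le_card (H : IsSemiovalWithNucleus S ℓ N) : nsec S ℓ ≤ Fintype.card F := by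
  obtain ⟨R, hR, hRℓ⟩ := H.exists_notMem_line
  obtain ⟨t, ⟨hRt, ht⟩, -⟩ := H.isSemioval R hR
  obtain ⟨Q, hQt, hQℓ⟩ := exists_common_point t ℓ
  have hQS : Q ∉ S := fun hQ => hRℓ (eq_of_nsec_eq_one ht hQ hQt hR hRt ▸ hQℓ)
  have hpos : 0 < ({P | pgMem P ℓ} \ S).ncard := (Set.ncard_pos).mpr ⟨Q, hQℓ, hQS⟩
  have := nsec_add_ncard_setOf_pgMem_sdiff (S := S) (ℓ := ℓ)
  lia

theorem ncard_sdiff_le_card (H : IsSemiovalWithNucleus S ℓ N) :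
    ({P | pgMem P ℓ} \ S).ncard ≤ Fintype.card F := by
  have := nsec_add_ncard_setOf_pgMem_sdiff (S := S) (ℓ := ℓ)
  have := H.two_lt_nsec
  lia

theorem one_lt_ncard_sdiff (H : IsSemiovalWithNucleus S ℓ N) :
    1 < ({P | pgMem P ℓ} \ S).ncard := by
  have hne : nsec S ℓ ≠ Fintype.card F := fun h =>
    H.natCast_nsec_ne_zero (h ▸ FiniteField.cast_card_eq_zero F)
  have := H.nsec_le_card.lt_of_ne hne
  have := nsec_add_ncard_setOf_pgMem_sdiff (S := S) (ℓ := ℓ)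
  lia

theorem isRedeiWithLine_sdiff_carrier (H : IsSemiovalWithNucleus S ℓ N)
    (hC : ∀ t ∈ affineTangents S ℓ, pgMem C t) :
    isRedeiWithLine (Fintype.card F)
      (({N} ∪ ((S \ {P | pgMem P ℓ}) ∪ ({P | pgMem P ℓ} \ S))) \ {C}) ℓ := by
  have hCℓ := H.carrier_mem_line hC
  have hCund := H.isUndetermined_of_carrier H.nucleus_notMem_tangent hC
  have hCaffine : C ∉ affinePart (S ∪ {N}) ℓ := fun h => h.2 hCℓ
  rw [H.union_symmDiff_eq, Set.union_sdiff_distrib, Set.sdiff_singleton_eq_self hCaffine]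
  refine isRedeiWithLine_affinePart_union H.ncard_affinePart_union (fun Q hQ => hQ.1.1)
    ((Set.ncard_le_ncard Set.sdiff_subset).trans H.ncard_sdiff_le_card)
    (isBlocking_affinePart_union (fun Q hQ => hQ.1.1) ?_ fun Q hQℓ hQ => ?_)
  · obtain ⟨Q, hQ, hQC⟩ := Set.exists_ne_of_one_lt_ncard H.one_lt_ncard_sdiff C
    exact ⟨Q, hQ, hQC⟩
  · by_cases hQS : Q ∈ S
    · exact H.isUndetermined_of_mem hQS hQℓ
    · obtain rfl : Q = C := by_contra fun h => hQ ⟨⟨hQℓ, hQS⟩, h⟩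
      exact hCund

theorem isBlocking_symmDiff (H : IsSemiovalWithNucleus S ℓ N) :
    isBlocking (affinePart (S ∪ {N}) ℓ ∪ ({P | pgMem P ℓ} \ S)) := by
  refine isBlocking_affinePart_union (fun Q hQ => hQ.1)
    ((Set.ncard_pos).mp (zero_lt_one.trans H.one_lt_ncard_sdiff)) fun Q hQℓ hQ => ?_
  exact H.isUndetermined_of_mem (by_contra fun hQS => hQ ⟨hQℓ, hQS⟩) hQℓ

theorem isRedeiWithLine_symmDiff (H : IsSemiovalWithNucleus S ℓ N) :
    isRedeiWithLine (Fintype.card F)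
      ({N} ∪ ((S \ {P | pgMem P ℓ}) ∪ ({P | pgMem P ℓ} \ S))) ℓ := by
  rw [H.union_symmDiff_eq]
  exact isRedeiWithLine_affinePart_union H.ncard_affinePart_union (fun Q hQ => hQ.1)
    H.ncard_sdiff_le_card H.isBlocking_symmDiff

theorem isMinimalBlocking_symmDiff (H : IsSemiovalWithNucleus S ℓ N)
    (hC : ¬ ∃ C, ∀ t ∈ affineTangents S ℓ, pgMem C t) :
    isMinimalBlocking ({N} ∪ ((S \ {P | pgMem P ℓ}) ∪ ({P | pgMem P ℓ} \ S))) := by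
  obtain ⟨P, hP, hPℓ⟩ := H.exists_mem
  rw [H.union_symmDiff_eq]
  exact isMinimalBlocking_affinePart_union H.ncard_affinePart_union (fun Q hQ => hQ.1)
    H.isBlocking_symmDiff
    (fun Q hQ hund => hC ⟨Q, H.carrier_of_isUndetermined hQ.2 hQ.1 hund⟩)
    hPℓ (fun h => h.2 hP) (H.isUndetermined_of_mem hP hPℓ)

end IsSemiovalWithNucleus

end BlockingSet

section Dichotomy

variable {F : Type*} [Field F] [Fintype F] {S : Set (PGPoint F)} {ℓ : PGLine F} {N : PGPoint F}

theorem isSemioval.isOval_or_isSemiovalWithNucleus (hS : isSemioval S)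
    (hsize : S.ncard + 1 = Fintype.card F + nsec S ℓ)
    (hN : ∀ P ∈ S, pgMem P ℓ → ∀ t : PGLine F, pgMem P t → nsec S t = 1 → pgMem N t) :
    (S.ncard = Fintype.card F + 1 ∧ ∀ L, nsec S L ≤ 2) ∨ IsSemiovalWithNucleus S ℓ N := by
  have hq := Fintype.one_lt_card (α := F)
  have hle := hS.card_add_one_le_ncard ((Set.ncard_pos).mp (by lia))
  obtain hcard | hlt := hle.eq_or_lt
  · exact Or.inl ⟨hcard.symm, hS.nsec_le_two hcard.symm⟩
  · exact Or.inr ⟨hS, hsize, by lia, hN⟩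

end Dichotomy

/-- Let `S` be a semioval of size `q − 1 + a` in `PG(2,q)`, `q = p^h`, with an `a`-secant `ℓ`,
let `N` be the nucleus of `ℓ` (the common point of the tangents to `S` at the points of
`ℓ ∩ S`), let `LL` be the set of tangents to `S` through the points of `S ∖ ℓ`, and let
`B = {N} ∪ (S Δ ℓ)`.  Then one of the following holds.
(1) `S` is an oval.
(2) `LL` is contained in a pencil with carrier `C`; then `C ∈ ℓ` and `B ∖ {C}` is a blocking
    set of Rédei type with Rédei line `ℓ`.
(3) `LL` is not contained in any pencil; then `B` is a minimal blocking set of Rédei type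
    with Rédei line `ℓ` and moreover
    (a) `p ∤ a`;
    (b) for every `R ∈ S ∖ ℓ` the line `RN` is not a tangent to `S`;
    (c) if `R₁, R₂ ∈ S ∖ ℓ` and there is `T ∈ ℓ` such that `RᵢT` meets `S ∪ {N}` in at least
        three points for `i = 1,2`, then `|R₁M ∩ (S ∪ {N})| = |R₂M ∩ (S ∪ {N})|` for all `M ∈ ℓ`;
    (d) if `R₁, R₂ ∈ S ∖ ℓ` and the tangents to `S` at these two points meet on `ℓ`, then
        `|R₁M ∩ (S ∪ {N})| = |R₂M ∩ (S ∪ {N})|` for all `M ∈ ℓ`. -/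
theorem stmt_6 {F : Type*} [Field F] [Fintype F] (p h q : ℕ) (hp : p.Prime) (hq : q = p ^ h)
    (hcard : Fintype.card F = q)
    (a : ℕ) (S : Set (PGPoint F)) (hS : isSemioval S) (hsize : S.ncard = q - 1 + a)
    (ℓ : PGLine F) (hℓ : nsec S ℓ = a)
    (N : PGPoint F)
    (hN : ∀ P ∈ S, pgMem P ℓ → ∀ t : PGLine F, pgMem P t → nsec S t = 1 → pgMem N t)
    (LL : Set (PGLine F))
    (hLL : LL = {t : PGLine F | nsec S t = 1 ∧ ∃ R ∈ S, ¬ pgMem R ℓ ∧ pgMem R t})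
    (B : Set (PGPoint F))
    (hB : B = {N} ∪ ((S \ {P | pgMem P ℓ}) ∪ ({P | pgMem P ℓ} \ S))) :
    -- (1) S is an oval
    (S.ncard = q + 1 ∧ ∀ L : PGLine F, nsec S L ≤ 2) ∨
    -- (2) LL is contained in a pencil with carrier C
    (∃ C : PGPoint F, (∀ t ∈ LL, pgMem C t) ∧ pgMem C ℓ ∧
      isRedeiWithLine q (B \ {C}) ℓ) ∨
    -- (3) LL is not contained in any pencil
    ((¬ ∃ C : PGPoint F, ∀ t ∈ LL, pgMem C t) ∧
      isMinimalBlocking B ∧ isRedeiWithLine q B ℓ ∧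
      -- (a)
      ¬ (p ∣ a) ∧
      -- (b)
      (∀ R ∈ S, ¬ pgMem R ℓ → R ≠ N →
        ∀ t : PGLine F, pgMem R t → pgMem N t → nsec S t ≠ 1) ∧
      -- (c)
      (∀ R₁ ∈ S, ∀ R₂ ∈ S, ¬ pgMem R₁ ℓ → ¬ pgMem R₂ ℓ →
        (∃ T : PGPoint F, pgMem T ℓ ∧
          (∀ L : PGLine F, pgMem R₁ L → pgMem T L → 3 ≤ nsec (S ∪ {N}) L) ∧
          (∀ L : PGLine F, pgMem R₂ L → pgMem T L → 3 ≤ nsec (S ∪ {N}) L)) →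
        ∀ M : PGPoint F, pgMem M ℓ →
          ∀ L₁ L₂ : PGLine F, pgMem R₁ L₁ → pgMem M L₁ → pgMem R₂ L₂ → pgMem M L₂ →
            nsec (S ∪ {N}) L₁ = nsec (S ∪ {N}) L₂) ∧
      -- (d)
      (∀ R₁ ∈ S, ∀ R₂ ∈ S, ¬ pgMem R₁ ℓ → ¬ pgMem R₂ ℓ →
        (∃ t₁ t₂ : PGLine F, pgMem R₁ t₁ ∧ nsec S t₁ = 1 ∧ pgMem R₂ t₂ ∧ nsec S t₂ = 1 ∧
          ∃ X : PGPoint F, pgMem X t₁ ∧ pgMem X t₂ ∧ pgMem X ℓ) →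
        ∀ M : PGPoint F, pgMem M ℓ →
          ∀ L₁ L₂ : PGLine F, pgMem R₁ L₁ → pgMem M L₁ → pgMem R₂ L₂ → pgMem M L₂ →
            nsec (S ∪ {N}) L₁ = nsec (S ∪ {N}) L₂)) := by
  have hpos : 0 < Fintype.card F := Fintype.card_pos
  have hsize' : S.ncard + 1 = Fintype.card F + nsec S ℓ := by lia
  obtain ⟨hoval, hsec⟩ | H := hS.isOval_or_isSemiovalWithNucleus hsize' hN
  · exact Or.inl ⟨hcard ▸ hoval, hsec⟩
  subst hLL hB hℓ hcard
  by_cases hC : ∃ C, ∀ t ∈ affineTangents S ℓ, pgMem C t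
  · obtain ⟨C, hC⟩ := hC
    exact Or.inr (Or.inl ⟨C, hC, H.carrier_mem_line hC, H.isRedeiWithLine_sdiff_carrier hC⟩)
  have := Fact.mk hp
  have := charP_of_card_eq_prime_pow hq
  refine Or.inr (Or.inr ⟨hC, H.isMinimalBlocking_symmDiff hC, H.isRedeiWithLine_symmDiff,
    (CharP.cast_eq_zero_iff F p _).not.mp H.natCast_nsec_ne_zero, ?_, ?_, ?_⟩)
  · exact fun R hR hRℓ _ t hRt hNt ht =>
      H.nucleus_notMem_tangent t ⟨ht, R, hR, hRℓ, hRt⟩ hNt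
  · rintro R₁ hR₁ R₂ hR₂ hR₁ℓ hR₂ℓ ⟨T, hTℓ, hT₁, hT₂⟩ M hMℓ L₁ L₂ hRL₁ hML₁ hRL₂ hML₂
    obtain ⟨K₁, hRK₁, hTK₁⟩ := exists_line_through (P := R₁) (Q := T) fun h => hR₁ℓ (h ▸ hTℓ)
    obtain ⟨K₂, hRK₂, hTK₂⟩ := exists_line_through (P := R₂) (Q := T) fun h => hR₂ℓ (h ▸ hTℓ)
    exact H.nsec_eq_of_three_le_nsec hR₁ hR₁ℓ hR₂ hR₂ℓ hTℓ hRK₁ hTK₁ (hT₁ K₁ hRK₁ hTK₁)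
      hRK₂ hTK₂ (hT₂ K₂ hRK₂ hTK₂) hMℓ hRL₁ hML₁ hRL₂ hML₂
  · rintro R₁ hR₁ R₂ hR₂ hR₁ℓ hR₂ℓ ⟨t₁, t₂, hRt₁, ht₁, hRt₂, ht₂, Q, hQt₁, hQt₂, hQℓ⟩ M hMℓ L₁ L₂
      hRL₁ hML₁ hRL₂ hML₂
    exact H.nsec_eq_of_tangents_meet hR₁ hR₁ℓ hR₂ hR₂ℓ hRt₁ ht₁ hRt₂ ht₂ hQt₁ hQt₂ hQℓ hMℓ
      hRL₁ hML₁ hRL₂ hML₂
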